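/- arXiv:1901.05813 — 5 statements merged into one kernel-verified Lean document; each statement's English description precedes it below -/
import Mathlib

section
/- For every unit spinor φ ∈ ℝ⁸ one has the orthogonal direct-sum decomposition ℝ⁸ = ℝφ ⊕ ℝ(jφ) ⊕ V_φ, where V_φ = {c(X)φ : X ∈ ℝ⁶}: the three subspaces are pairwise orthogonal, the linear map X ↦ c(X)φ from ℝ⁶ to ℝ⁸ is injective (so dim V_φ = 6), and together the three subspaces span ℝ⁸. -/
/- STATEMENT 4: For every unit spinor φ ∈ ℝ⁸ one has the orthogonal direct-sum
decomposition ℝ⁸ = ℝφ ⊕ ℝ(jφ) ⊕ V_φ with V_φ = {c(X)φ : X ∈ ℝ⁶}: the three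
subspaces are pairwise orthogonal, X ↦ c(X)φ is injective, and together they
span ℝ⁸. -/

open Matrix
open scoped RealInnerProductSpace

noncomputable section

namespace Stmt4

def E (i j : Fin 8) : Matrix (Fin 8) (Fin 8) ℝ :=
  Matrix.of fun k l => if k = i ∧ l = j then (-1 : ℝ) else if k = j ∧ l = i then 1 else 0

def e : Fin 6 → Matrix (Fin 8) (Fin 8) ℝ :=
  ![E 0 7 + E 1 6 - E 2 5 - E 3 4,
    -E 0 6 + E 1 7 + E 2 4 - E 3 5,
    -E 0 5 + E 1 4 - E 2 7 + E 3 6,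
    -E 0 4 - E 1 5 - E 2 6 - E 3 7,
    -E 0 2 - E 1 3 + E 4 6 + E 5 7,
    E 0 3 - E 1 2 - E 4 7 + E 5 6]

/-- `j = e₁·e₂·e₃·e₄·e₅·e₆`. -/
def jmat : Matrix (Fin 8) (Fin 8) ℝ := e 0 * e 1 * e 2 * e 3 * e 4 * e 5

abbrev V8 := EuclideanSpace ℝ (Fin 8)
abbrev V6 := EuclideanSpace ℝ (Fin 6)

/-- Clifford multiplication by the vector `X ∈ ℝ⁶`. -/
def c (X : V6) : Matrix (Fin 8) (Fin 8) ℝ := ∑ a, X a • e a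

/-- Action of an 8×8 matrix on a spinor in `Δ₆ = ℝ⁸`. -/
def act (M : Matrix (Fin 8) (Fin 8) ℝ) (ψ : V8) : V8 :=
  (EuclideanSpace.equiv (Fin 8) ℝ).symm (M.mulVec (EuclideanSpace.equiv (Fin 8) ℝ ψ))

lemma e0_mulVec (v : Fin 8 → ℝ) :
    (e 0).mulVec v = ![-v 7, -v 6, v 5, v 4, -v 3, -v 2, v 1, v 0] := by
  ext i
  fin_cases i <;> simp [e, E, Matrix.mulVec, dotProduct, Fin.sum_univ_eight]

lemma e1_mulVec (v : Fin 8 → ℝ) :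
    (e 1).mulVec v = ![v 6, -v 7, -v 4, v 5, v 2, -v 3, -v 0, v 1] := by
  ext i
  fin_cases i <;> simp [e, E, Matrix.mulVec, dotProduct, Fin.sum_univ_eight]

lemma e2_mulVec (v : Fin 8 → ℝ) :
    (e 2).mulVec v = ![v 5, -v 4, v 7, -v 6, v 1, -v 0, v 3, -v 2] := by
  ext i
  fin_cases i <;> simp [e, E, Matrix.mulVec, dotProduct, Fin.sum_univ_eight]

lemma e3_mulVec (v : Fin 8 → ℝ) :
    (e 3).mulVec v = ![v 4, v 5, v 6, v 7, -v 0, -v 1, -v 2, -v 3] := by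
  ext i
  fin_cases i <;> simp [e, E, Matrix.mulVec, dotProduct, Fin.sum_univ_eight]

lemma e4_mulVec (v : Fin 8 → ℝ) :
    (e 4).mulVec v = ![v 2, v 3, -v 0, -v 1, -v 6, -v 7, v 4, v 5] := by
  ext i
  fin_cases i <;> simp [e, E, Matrix.mulVec, dotProduct, Fin.sum_univ_eight]

lemma e5_mulVec (v : Fin 8 → ℝ) :
    (e 5).mulVec v = ![-v 3, v 2, -v 1, v 0, v 7, -v 6, v 5, -v 4] := by
  ext i
  fin_cases i <;> simp [e, E, Matrix.mulVec, dotProduct, Fin.sum_univ_eight]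

lemma jmat_mulVec (v : Fin 8 → ℝ) :
    jmat.mulVec v = ![v 1, -v 0, -v 3, v 2, -v 5, v 4, v 7, -v 6] := by
  simp only [jmat, ← Matrix.mulVec_mulVec]
  rw [e5_mulVec, e4_mulVec, e3_mulVec, e2_mulVec, e1_mulVec, e0_mulVec]
  ext i
  fin_cases i <;> simp

lemma act_jmat (φ : V8) : act jmat φ = !₂[φ 1, -φ 0, -φ 3, φ 2, -φ 5, φ 4, φ 7, -φ 6] := by
  unfold act
  rw [jmat_mulVec]
  rfl

lemma act_c (X : V6) (φ : V8) : act (c X) φ = !₂[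
    X 0 * (-φ 7) + X 1 * (φ 6) + X 2 * (φ 5) + X 3 * (φ 4) + X 4 * (φ 2) + X 5 * (-φ 3),
    X 0 * (-φ 6) + X 1 * (-φ 7) + X 2 * (-φ 4) + X 3 * (φ 5) + X 4 * (φ 3) + X 5 * (φ 2),
    X 0 * (φ 5) + X 1 * (-φ 4) + X 2 * (φ 7) + X 3 * (φ 6) + X 4 * (-φ 0) + X 5 * (-φ 1),
    X 0 * (φ 4) + X 1 * (φ 5) + X 2 * (-φ 6) + X 3 * (φ 7) + X 4 * (-φ 1) + X 5 * (φ 0),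
    X 0 * (-φ 3) + X 1 * (φ 2) + X 2 * (φ 1) + X 3 * (-φ 0) + X 4 * (-φ 6) + X 5 * (φ 7),
    X 0 * (-φ 2) + X 1 * (-φ 3) + X 2 * (-φ 0) + X 3 * (-φ 1) + X 4 * (-φ 7) + X 5 * (-φ 6),
    X 0 * (φ 1) + X 1 * (-φ 0) + X 2 * (φ 3) + X 3 * (-φ 2) + X 4 * (φ 4) + X 5 * (φ 5),
    X 0 * (φ 0) + X 1 * (φ 1) + X 2 * (-φ 2) + X 3 * (-φ 3) + X 4 * (φ 5) + X 5 * (-φ 4)] := by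
  unfold act c
  rw [Matrix.sum_mulVec]
  simp only [Fin.sum_univ_six, Matrix.smul_mulVec, e0_mulVec, e1_mulVec, e2_mulVec, e3_mulVec,
    e4_mulVec, e5_mulVec]
  ext i
  fin_cases i <;> simp

theorem spinor_decomposition_dim6 (φ : V8) (hφ : ‖φ‖ = 1) :
    -- φ, jφ and V_φ are pairwise orthogonal
    ⟪φ, act jmat φ⟫ = 0 ∧
    (∀ X : V6, ⟪act (c X) φ, φ⟫ = 0 ∧ ⟪act (c X) φ, act jmat φ⟫ = 0) ∧
    -- X ↦ c(X)φ is injective, so dim V_φ = 6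
    Function.Injective (fun X : V6 => act (c X) φ) ∧
    -- the three subspaces together span ℝ⁸
    (∀ ψ : V8, ∃ (a b : ℝ) (X : V6), ψ = a • φ + b • act jmat φ + act (c X) φ) := by
  have hn : φ 0 ^ 2 + φ 1 ^ 2 + φ 2 ^ 2 + φ 3 ^ 2 + φ 4 ^ 2 + φ 5 ^ 2 + φ 6 ^ 2 + φ 7 ^ 2 = 1 := by
    have h := EuclideanSpace.real_norm_sq_eq φ
    rw [hφ, Fin.sum_univ_eight] at h
    linarith
  refine ⟨?_, ?_, ?_, ?_⟩
  · rw [act_jmat]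
    simp [PiLp.inner_apply, Fin.sum_univ_eight]
    ring
  · intro X
    rw [act_jmat, act_c]
    constructor <;>
    · simp [PiLp.inner_apply, Fin.sum_univ_eight]
      ring
  · intro X Y h
    simp only [act_c] at h
    have h0 := congrArg (fun v : V8 => v 0) h
    have h1 := congrArg (fun v : V8 => v 1) h
    have h2 := congrArg (fun v : V8 => v 2) h
    have h3 := congrArg (fun v : V8 => v 3) h
    have h4 := congrArg (fun v : V8 => v 4) h
    have h5 := congrArg (fun v : V8 => v 5) h
    have h6 := congrArg (fun v : V8 => v 6) h
    have h7 := congrArg (fun v : V8 => v 7) h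
    simp at h0 h1 h2 h3 h4 h5 h6 h7
    ext i
    fin_cases i <;> simp only [Fin.zero_eta, Fin.mk_one, Fin.reduceFinMk]
    · linear_combination (-φ 7) * h0 + (-φ 6) * h1 + (φ 5) * h2 + (φ 4) * h3 + (-φ 3) * h4 + (-φ 2) * h5 + (φ 1) * h6 + (φ 0) * h7 - (X 0 - Y 0) * hn
    · linear_combination (φ 6) * h0 + (-φ 7) * h1 + (-φ 4) * h2 + (φ 5) * h3 + (φ 2) * h4 + (-φ 3) * h5 + (-φ 0) * h6 + (φ 1) * h7 - (X 1 - Y 1) * hn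
    · linear_combination (φ 5) * h0 + (-φ 4) * h1 + (φ 7) * h2 + (-φ 6) * h3 + (φ 1) * h4 + (-φ 0) * h5 + (φ 3) * h6 + (-φ 2) * h7 - (X 2 - Y 2) * hn
    · linear_combination (φ 4) * h0 + (φ 5) * h1 + (φ 6) * h2 + (φ 7) * h3 + (-φ 0) * h4 + (-φ 1) * h5 + (-φ 2) * h6 + (-φ 3) * h7 - (X 3 - Y 3) * hn
    · linear_combination (φ 2) * h0 + (φ 3) * h1 + (-φ 0) * h2 + (-φ 1) * h3 + (-φ 6) * h4 + (-φ 7) * h5 + (φ 4) * h6 + (φ 5) * h7 - (X 4 - Y 4) * hn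
    · linear_combination (-φ 3) * h0 + (φ 2) * h1 + (-φ 1) * h2 + (φ 0) * h3 + (φ 7) * h4 + (-φ 6) * h5 + (φ 5) * h6 + (-φ 4) * h7 - (X 5 - Y 5) * hn
  · intro ψ
    refine ⟨ψ 0 * (φ 0) + ψ 1 * (φ 1) + ψ 2 * (φ 2) + ψ 3 * (φ 3) + ψ 4 * (φ 4) + ψ 5 * (φ 5) + ψ 6 * (φ 6) + ψ 7 * (φ 7),
      ψ 0 * (φ 1) + ψ 1 * (-φ 0) + ψ 2 * (-φ 3) + ψ 3 * (φ 2) + ψ 4 * (-φ 5) + ψ 5 * (φ 4) + ψ 6 * (φ 7) + ψ 7 * (-φ 6),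
      !₂[ψ 0 * (-φ 7) + ψ 1 * (-φ 6) + ψ 2 * (φ 5) + ψ 3 * (φ 4) + ψ 4 * (-φ 3) + ψ 5 * (-φ 2) + ψ 6 * (φ 1) + ψ 7 * (φ 0),
        ψ 0 * (φ 6) + ψ 1 * (-φ 7) + ψ 2 * (-φ 4) + ψ 3 * (φ 5) + ψ 4 * (φ 2) + ψ 5 * (-φ 3) + ψ 6 * (-φ 0) + ψ 7 * (φ 1),
        ψ 0 * (φ 5) + ψ 1 * (-φ 4) + ψ 2 * (φ 7) + ψ 3 * (-φ 6) + ψ 4 * (φ 1) + ψ 5 * (-φ 0) + ψ 6 * (φ 3) + ψ 7 * (-φ 2),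
        ψ 0 * (φ 4) + ψ 1 * (φ 5) + ψ 2 * (φ 6) + ψ 3 * (φ 7) + ψ 4 * (-φ 0) + ψ 5 * (-φ 1) + ψ 6 * (-φ 2) + ψ 7 * (-φ 3),
        ψ 0 * (φ 2) + ψ 1 * (φ 3) + ψ 2 * (-φ 0) + ψ 3 * (-φ 1) + ψ 4 * (-φ 6) + ψ 5 * (-φ 7) + ψ 6 * (φ 4) + ψ 7 * (φ 5),
        ψ 0 * (-φ 3) + ψ 1 * (φ 2) + ψ 2 * (-φ 1) + ψ 3 * (φ 0) + ψ 4 * (φ 7) + ψ 5 * (-φ 6) + ψ 6 * (φ 5) + ψ 7 * (-φ 4)], ?_⟩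
    rw [act_jmat, act_c]
    ext i
    fin_cases i <;> simp
    · linear_combination -(ψ 0) * hn
    · linear_combination -(ψ 1) * hn
    · linear_combination -(ψ 2) * hn
    · linear_combination -(ψ 3) * hn
    · linear_combination -(ψ 4) * hn
    · linear_combination -(ψ 5) * hn
    · linear_combination -(ψ 6) * hn
    · linear_combination -(ψ 7) * hn

end Stmt4
end
end

section
/- The annihilator {A ∈ so(7) : ρ₇(A)·s₅ = 0} of the unit spinor s₅ under the spin representation is exactly the linear span of the fourteen matrices G₁₆+G₃₇, G₁₆−G₂₅, G₁₅+G₂₆, G₂₆+G₄₇, G₁₇−G₃₆, G₁₇+G₄₅, G₂₇−G₃₅, G₂₇−G₄₆, G₁₂+G₃₄, G₁₂−G₅₆, G₁₃−G₂₄, G₁₃−G₆₇, G₁₄+G₂₃, G₁₄+G₅₇; in particular it has dimension 14 and is closed under the matrix commutator, i.e. it is a Lie subalgebra of so(7) (the Lie algebra g₂ stabilizing s₅). -/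
/- STATEMENT 10: The annihilator {A ∈ so(7) : ρ₇(A)·s₅ = 0} of the unit spinor s₅
under the spin representation is exactly the span of the fourteen listed
matrices; in particular it has dimension 14 and is closed under the matrix
commutator (it is the Lie algebra g₂ stabilizing s₅).
(All indices 0-based: G a b = G_{a+1,b+1}, s 4 = s₅.) -/

open Matrix

namespace Stmt10

def E (i j : Fin 8) : Matrix (Fin 8) (Fin 8) ℝ :=
  Matrix.of fun k l => if k = i ∧ l = j then (-1 : ℝ) else if k = j ∧ l = i then 1 else 0

def e : Fin 7 → Matrix (Fin 8) (Fin 8) ℝ :=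
  ![E 0 7 + E 1 6 - E 2 5 - E 3 4,
    -E 0 6 + E 1 7 + E 2 4 - E 3 5,
    -E 0 5 + E 1 4 - E 2 7 + E 3 6,
    -E 0 4 - E 1 5 - E 2 6 - E 3 7,
    -E 0 2 - E 1 3 + E 4 6 + E 5 7,
    E 0 3 - E 1 2 - E 4 7 + E 5 6,
    E 0 1 - E 2 3 - E 4 5 + E 6 7]

/-- The basis `G_{ab}` of `so(7)`. -/
def G (a b : Fin 7) : Matrix (Fin 7) (Fin 7) ℝ :=
  Matrix.of fun k l => if k = a ∧ l = b then (-1 : ℝ) else if k = b ∧ l = a then 1 else 0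

/-- The differential of the spin representation `so(7) → M₈(ℝ)`: the linear map
determined by `ρ₇ (G a b) = (1/2) eₐ * e_b` for `a < b`. -/
noncomputable def ρ₇ (A : Matrix (Fin 7) (Fin 7) ℝ) : Matrix (Fin 8) (Fin 8) ℝ :=
  (4⁻¹ : ℝ) • ∑ p, ∑ q, A q p • (e p * e q)

def s (i : Fin 8) : Fin 8 → ℝ := Pi.single i 1

/-- The span of the fourteen listed generators of `g₂`. -/
def g2 : Submodule ℝ (Matrix (Fin 7) (Fin 7) ℝ) :=
  Submodule.span ℝ {G 0 5 + G 2 6, G 0 5 - G 1 4, G 0 4 + G 1 5, G 1 5 + G 3 6,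
    G 0 6 - G 2 5, G 0 6 + G 3 4, G 1 6 - G 2 4, G 1 6 - G 3 5,
    G 0 1 + G 2 3, G 0 1 - G 4 5, G 0 2 - G 1 3, G 0 2 - G 5 6,
    G 0 3 + G 1 2, G 0 3 + G 4 6}

/-- Integer version of `E`. -/
def EZ (i j : Fin 8) : Matrix (Fin 8) (Fin 8) ℤ :=
  Matrix.of fun k l => if k = i ∧ l = j then (-1 : ℤ) else if k = j ∧ l = i then 1 else 0

/-- Integer version of `e`. -/
def eZ : Fin 7 → Matrix (Fin 8) (Fin 8) ℤ :=
  ![EZ 0 7 + EZ 1 6 - EZ 2 5 - EZ 3 4,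
    -EZ 0 6 + EZ 1 7 + EZ 2 4 - EZ 3 5,
    -EZ 0 5 + EZ 1 4 - EZ 2 7 + EZ 3 6,
    -EZ 0 4 - EZ 1 5 - EZ 2 6 - EZ 3 7,
    -EZ 0 2 - EZ 1 3 + EZ 4 6 + EZ 5 7,
    EZ 0 3 - EZ 1 2 - EZ 4 7 + EZ 5 6,
    EZ 0 1 - EZ 2 3 - EZ 4 5 + EZ 6 7]

theorem E_cast (i j k l : Fin 8) : E i j k l = ((EZ i j k l : ℤ) : ℝ) := by
  simp only [E, EZ, Matrix.of_apply]
  split_ifs <;> simp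

theorem e_cast (p : Fin 7) (k l : Fin 8) : e p k l = ((eZ p k l : ℤ) : ℝ) := by
  fin_cases p <;> simp [e, eZ, E_cast]

/-- The product matrices applied to the spinor, over the integers. -/
def colZ (k : Fin 8) (p q : Fin 7) : ℤ := ∑ l, eZ p k l * eZ q l 4

theorem col_cast (k : Fin 8) (p q : Fin 7) : (e p * e q) k 4 = ((colZ k p q : ℤ) : ℝ) := by
  simp [Matrix.mul_apply, colZ, e_cast]

theorem rho_apply (A : Matrix (Fin 7) (Fin 7) ℝ) (k : Fin 8) :
    (ρ₇ A).mulVec (s 4) k = 4⁻¹ * ∑ p, ∑ q, A q p * ((colZ k p q : ℤ) : ℝ) := by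
  simp [ρ₇, s, Matrix.sum_apply, col_cast]

/-- Explicit form of the general linear combination of the generators. -/
def M (c : Fin 14 → ℝ) : Matrix (Fin 7) (Fin 7) ℝ :=
  !![0, -c 8 - c 9, -c 10 - c 11, -c 12 - c 13, -c 2, -c 0 - c 1, -c 4 - c 5;
    c 8 + c 9, 0, -c 12, c 10, c 1, -c 2 - c 3, -c 6 - c 7;
    c 10 + c 11, c 12, 0, -c 8, c 6, c 4, -c 0;
    c 12 + c 13, -c 10, c 8, 0, -c 5, c 7, -c 3;
    c 2, -c 1, -c 6, c 5, 0, c 9, -c 13;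
    c 0 + c 1, c 2 + c 3, -c 4, -c 7, -c 9, 0, c 11;
    c 4 + c 5, c 6 + c 7, c 0, c 3, c 13, -c 11, 0]

/-- The generators as a family. -/
def v : Fin 14 → Matrix (Fin 7) (Fin 7) ℝ :=
  ![G 0 5 + G 2 6, G 0 5 - G 1 4, G 0 4 + G 1 5, G 1 5 + G 3 6, G 0 6 - G 2 5, G 0 6 + G 3 4, G 1 6 - G 2 4, G 1 6 - G 3 5, G 0 1 + G 2 3, G 0 1 - G 4 5, G 0 2 - G 1 3, G 0 2 - G 5 6, G 0 3 + G 1 2, G 0 3 + G 4 6]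

theorem M_eq (c : Fin 14 → ℝ) : M c = ∑ i, c i • v i := by
  ext i j
  simp only [Fin.sum_univ_succ, Matrix.add_apply, Matrix.smul_apply, Matrix.sum_apply]
  fin_cases i <;> fin_cases j <;> simp [M, v, G] <;> ring

theorem g2_eq : g2 = Submodule.span ℝ (Set.range v) := by
  rw [g2]
  congr 1
  simp only [v, Matrix.range_cons, Matrix.range_empty, Set.union_empty, Set.singleton_union]

theorem mem_g2 (A : Matrix (Fin 7) (Fin 7) ℝ) : A ∈ g2 ↔ ∃ c, M c = A := by
  rw [g2_eq, Submodule.mem_span_range_iff_exists_fun]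
  simp only [M_eq]

theorem mem_g2' (A : Matrix (Fin 7) (Fin 7) ℝ) : A ∈ g2 ↔ Aᵀ = -A ∧
    A 5 0 + A 4 1 -A 6 2 = 0 ∧ -A 4 0 + A 5 1 - A 6 3 = 0 ∧ -A 6 0 - A 5 2 + A 4 3 = 0 ∧ -A 6 1 - A 4 2 - A 5 3 = 0 ∧ A 1 0 -A 3 2 + A 5 4 = 0 ∧ -A 2 0 - A 3 1 - A 6 5 = 0 ∧ A 3 0 -A 2 1 - A 6 4 = 0 := by
  rw [mem_g2]
  constructor
  · rintro ⟨c, rfl⟩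
    refine ⟨?_, ?_, ?_, ?_, ?_, ?_, ?_, ?_⟩
    · ext i j
      fin_cases i <;> fin_cases j <;> simp [M] <;> ring
    all_goals simp [M]
  · rintro ⟨h, h1, h2, h3, h4, h5, h6, h7⟩
    have hs : ∀ i j, A j i = - A i j := fun i j => congrFun (congrFun h i) j
    have hd : ∀ i, A i i = 0 := fun i => by linarith [hs i i]
    refine ⟨![A 6 2, -A 4 1, A 4 0, A 6 3, -A 5 2, A 4 3, -A 4 2, -A 5 3, A 3 2, -A 5 4, -A 3 1, -A 6 5, A 2 1, A 6 4], ?_⟩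
    ext i j
    fin_cases i <;> fin_cases j <;> simp [M, hd] <;>
      linarith [hs 0 1, hs 0 2, hs 0 3, hs 0 4, hs 0 5, hs 0 6, hs 1 2, hs 1 3, hs 1 4, hs 1 5, hs 1 6, hs 2 3, hs 2 4, hs 2 5, hs 2 6, hs 3 4, hs 3 5, hs 3 6, hs 4 5, hs 4 6, hs 5 6]

theorem ann_iff (A : Matrix (Fin 7) (Fin 7) ℝ) (h : Aᵀ = -A) : (ρ₇ A).mulVec (s 4) = 0 ↔
    A 5 0 + A 4 1 -A 6 2 = 0 ∧ -A 4 0 + A 5 1 - A 6 3 = 0 ∧ -A 6 0 - A 5 2 + A 4 3 = 0 ∧ -A 6 1 - A 4 2 - A 5 3 = 0 ∧ A 1 0 -A 3 2 + A 5 4 = 0 ∧ -A 2 0 - A 3 1 - A 6 5 = 0 ∧ A 3 0 -A 2 1 - A 6 4 = 0 := by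
  have hs : ∀ i j, A j i = - A i j := fun i j => congrFun (congrFun h i) j
  have hd : ∀ i, A i i = 0 := fun i => by linarith [hs i i]
  have k0 : (ρ₇ A).mulVec (s 4) 0 = 2⁻¹ * (A 5 0 + A 4 1 -A 6 2) := by
    have t : ∀ p q, colZ 0 p q = (![![0, 0, 0, 0, 0, 1, 0], ![0, 0, 0, 0, 1, 0, 0], ![0, 0, 0, 0, 0, 0, -1], ![0, 0, 0, 0, 0, 0, 0], ![0, -1, 0, 0, 0, 0, 0], ![-1, 0, 0, 0, 0, 0, 0], ![0, 0, 1, 0, 0, 0, 0]] : Fin 7 → Fin 7 → ℤ) p q := by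
      decide
    rw [rho_apply]
    simp only [t]
    simp [Fin.sum_univ_succ, hd]
    linarith [hs 0 1, hs 0 2, hs 0 3, hs 0 4, hs 0 5, hs 0 6, hs 1 2, hs 1 3, hs 1 4, hs 1 5, hs 1 6, hs 2 3, hs 2 4, hs 2 5, hs 2 6, hs 3 4, hs 3 5, hs 3 6, hs 4 5, hs 4 6, hs 5 6]
  have k1 : (ρ₇ A).mulVec (s 4) 1 = 2⁻¹ * (-A 4 0 + A 5 1 - A 6 3) := by
    have t : ∀ p q, colZ 1 p q = (![![0, 0, 0, 0, -1, 0, 0], ![0, 0, 0, 0, 0, 1, 0], ![0, 0, 0, 0, 0, 0, 0], ![0, 0, 0, 0, 0, 0, -1], ![1, 0, 0, 0, 0, 0, 0], ![0, -1, 0, 0, 0, 0, 0], ![0, 0, 0, 1, 0, 0, 0]] : Fin 7 → Fin 7 → ℤ) p q := by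
      decide
    rw [rho_apply]
    simp only [t]
    simp [Fin.sum_univ_succ, hd]
    linarith [hs 0 1, hs 0 2, hs 0 3, hs 0 4, hs 0 5, hs 0 6, hs 1 2, hs 1 3, hs 1 4, hs 1 5, hs 1 6, hs 2 3, hs 2 4, hs 2 5, hs 2 6, hs 3 4, hs 3 5, hs 3 6, hs 4 5, hs 4 6, hs 5 6]
  have k2 : (ρ₇ A).mulVec (s 4) 2 = 2⁻¹ * (-A 6 0 - A 5 2 + A 4 3) := by
    have t : ∀ p q, colZ 2 p q = (![![0, 0, 0, 0, 0, 0, -1], ![0, 0, 0, 0, 0, 0, 0], ![0, 0, 0, 0, 0, -1, 0], ![0, 0, 0, 0, 1, 0, 0], ![0, 0, 0, -1, 0, 0, 0], ![0, 0, 1, 0, 0, 0, 0], ![1, 0, 0, 0, 0, 0, 0]] : Fin 7 → Fin 7 → ℤ) p q := by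
      decide
    rw [rho_apply]
    simp only [t]
    simp [Fin.sum_univ_succ, hd]
    linarith [hs 0 1, hs 0 2, hs 0 3, hs 0 4, hs 0 5, hs 0 6, hs 1 2, hs 1 3, hs 1 4, hs 1 5, hs 1 6, hs 2 3, hs 2 4, hs 2 5, hs 2 6, hs 3 4, hs 3 5, hs 3 6, hs 4 5, hs 4 6, hs 5 6]
  have k3 : (ρ₇ A).mulVec (s 4) 3 = 2⁻¹ * (-A 6 1 - A 4 2 - A 5 3) := by
    have t : ∀ p q, colZ 3 p q = (![![0, 0, 0, 0, 0, 0, 0], ![0, 0, 0, 0, 0, 0, -1], ![0, 0, 0, 0, -1, 0, 0], ![0, 0, 0, 0, 0, -1, 0], ![0, 0, 1, 0, 0, 0, 0], ![0, 0, 0, 1, 0, 0, 0], ![0, 1, 0, 0, 0, 0, 0]] : Fin 7 → Fin 7 → ℤ) p q := by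
      decide
    rw [rho_apply]
    simp only [t]
    simp [Fin.sum_univ_succ, hd]
    linarith [hs 0 1, hs 0 2, hs 0 3, hs 0 4, hs 0 5, hs 0 6, hs 1 2, hs 1 3, hs 1 4, hs 1 5, hs 1 6, hs 2 3, hs 2 4, hs 2 5, hs 2 6, hs 3 4, hs 3 5, hs 3 6, hs 4 5, hs 4 6, hs 5 6]
  have k5 : (ρ₇ A).mulVec (s 4) 5 = 2⁻¹ * (A 1 0 -A 3 2 + A 5 4) := by
    have t : ∀ p q, colZ 5 p q = (![![0, 1, 0, 0, 0, 0, 0], ![-1, 0, 0, 0, 0, 0, 0], ![0, 0, 0, -1, 0, 0, 0], ![0, 0, 1, 0, 0, 0, 0], ![0, 0, 0, 0, 0, 1, 0], ![0, 0, 0, 0, -1, 0, 0], ![0, 0, 0, 0, 0, 0, 0]] : Fin 7 → Fin 7 → ℤ) p q := by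
      decide
    rw [rho_apply]
    simp only [t]
    simp [Fin.sum_univ_succ, hd]
    linarith [hs 0 1, hs 0 2, hs 0 3, hs 0 4, hs 0 5, hs 0 6, hs 1 2, hs 1 3, hs 1 4, hs 1 5, hs 1 6, hs 2 3, hs 2 4, hs 2 5, hs 2 6, hs 3 4, hs 3 5, hs 3 6, hs 4 5, hs 4 6, hs 5 6]
  have k6 : (ρ₇ A).mulVec (s 4) 6 = 2⁻¹ * (-A 2 0 - A 3 1 - A 6 5) := by
    have t : ∀ p q, colZ 6 p q = (![![0, 0, -1, 0, 0, 0, 0], ![0, 0, 0, -1, 0, 0, 0], ![1, 0, 0, 0, 0, 0, 0], ![0, 1, 0, 0, 0, 0, 0], ![0, 0, 0, 0, 0, 0, 0], ![0, 0, 0, 0, 0, 0, -1], ![0, 0, 0, 0, 0, 1, 0]] : Fin 7 → Fin 7 → ℤ) p q := by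
      decide
    rw [rho_apply]
    simp only [t]
    simp [Fin.sum_univ_succ, hd]
    linarith [hs 0 1, hs 0 2, hs 0 3, hs 0 4, hs 0 5, hs 0 6, hs 1 2, hs 1 3, hs 1 4, hs 1 5, hs 1 6, hs 2 3, hs 2 4, hs 2 5, hs 2 6, hs 3 4, hs 3 5, hs 3 6, hs 4 5, hs 4 6, hs 5 6]
  have k7 : (ρ₇ A).mulVec (s 4) 7 = 2⁻¹ * (A 3 0 -A 2 1 - A 6 4) := by
    have t : ∀ p q, colZ 7 p q = (![![0, 0, 0, 1, 0, 0, 0], ![0, 0, -1, 0, 0, 0, 0], ![0, 1, 0, 0, 0, 0, 0], ![-1, 0, 0, 0, 0, 0, 0], ![0, 0, 0, 0, 0, 0, -1], ![0, 0, 0, 0, 0, 0, 0], ![0, 0, 0, 0, 1, 0, 0]] : Fin 7 → Fin 7 → ℤ) p q := by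
      decide
    rw [rho_apply]
    simp only [t]
    simp [Fin.sum_univ_succ, hd]
    linarith [hs 0 1, hs 0 2, hs 0 3, hs 0 4, hs 0 5, hs 0 6, hs 1 2, hs 1 3, hs 1 4, hs 1 5, hs 1 6, hs 2 3, hs 2 4, hs 2 5, hs 2 6, hs 3 4, hs 3 5, hs 3 6, hs 4 5, hs 4 6, hs 5 6]
  have k4 : (ρ₇ A).mulVec (s 4) 4 = 2⁻¹ * (0) := by
    have t : ∀ p q, colZ 4 p q = (![![-1, 0, 0, 0, 0, 0, 0], ![0, -1, 0, 0, 0, 0, 0], ![0, 0, -1, 0, 0, 0, 0], ![0, 0, 0, -1, 0, 0, 0], ![0, 0, 0, 0, -1, 0, 0], ![0, 0, 0, 0, 0, -1, 0], ![0, 0, 0, 0, 0, 0, -1]] : Fin 7 → Fin 7 → ℤ) p q := by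
      decide
    rw [rho_apply]
    simp only [t]
    simp [Fin.sum_univ_succ, hd]
    skip
  constructor
  · intro h0
    simp only [h0, Pi.zero_apply] at k0 k1 k2 k3 k5 k6 k7
    refine ⟨?_, ?_, ?_, ?_, ?_, ?_, ?_⟩ <;> linarith
  · rintro ⟨h0, h1, h2, h3, h5, h6, h7⟩
    ext k
    fin_cases k
    · exact k0.trans (by rw [h0]; simp)
    · exact k1.trans (by rw [h1]; simp)
    · exact k2.trans (by rw [h2]; simp)
    · exact k3.trans (by rw [h3]; simp)
    · exact k4.trans (by simp)
    · exact k5.trans (by rw [h5]; simp)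
    · exact k6.trans (by rw [h6]; simp)
    · exact k7.trans (by rw [h7]; simp)

theorem v_indep : LinearIndependent ℝ v := by
  rw [Fintype.linearIndependent_iff]
  intro c hc
  rw [← M_eq] at hc
  have h : ∀ i j, M c i j = 0 := fun i j => by rw [hc]; rfl
  have a : ∀ n : Fin 14, c n = 0 := by
    intro n
    have h0 := h 6 2
    have h1 := h 4 1
    have h2 := h 4 0
    have h3 := h 6 3
    have h4 := h 5 2
    have h5 := h 4 3
    have h6 := h 4 2
    have h7 := h 5 3
    have h8 := h 3 2
    have h9 := h 5 4
    have h10 := h 3 1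
    have h11 := h 6 5
    have h12 := h 2 1
    have h13 := h 6 4
    simp [M] at h0 h1 h2 h3 h4 h5 h6 h7 h8 h9 h10 h11 h12 h13
    fin_cases n <;> assumption
  exact a

set_option maxHeartbeats 4000000 in
theorem annihilator_is_g2 :
    {A : Matrix (Fin 7) (Fin 7) ℝ | Aᵀ = -A ∧ (ρ₇ A).mulVec (s 4) = 0} = ↑g2 ∧
    Module.finrank ℝ ↥g2 = 14 ∧
    (∀ A ∈ g2, ∀ B ∈ g2, A * B - B * A ∈ g2) := by
  refine ⟨?_, ?_, ?_⟩
  · ext A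
    simp only [Set.mem_ofPred_eq, SetLike.mem_coe]
    rw [mem_g2']
    exact and_congr_right (ann_iff A)
  · rw [g2_eq, finrank_span_eq_card v_indep]
    simp
  · intro A hA B hB
    rw [mem_g2']
    refine ⟨?_, ?_⟩
    · have h1 := ((mem_g2' A).1 hA).1
      have h2 := ((mem_g2' B).1 hB).1
      rw [Matrix.transpose_sub, Matrix.transpose_mul, Matrix.transpose_mul, h1, h2]
      simp
    · obtain ⟨c, rfl⟩ := (mem_g2 A).1 hA
      obtain ⟨d, rfl⟩ := (mem_g2 B).1 hB
      simp only [Matrix.sub_apply, Matrix.mul_apply, Fin.sum_univ_seven]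
      refine ⟨?_, ?_, ?_, ?_, ?_, ?_, ?_⟩ <;> simp [M] <;> ring

end Stmt10
end

section
/- With respect to the Frobenius inner product ⟨A,B⟩ = tr(AᵀB) on so(7), the orthogonal complement of the 14-dimensional subalgebra g₂ = {A ∈ so(7) : ρ₇(A)·s₅ = 0} is exactly m = span{G₁₆−G₃₇+G₂₅, G₁₅−G₂₆+G₄₇, G₁₇+G₃₆−G₄₅, G₂₇+G₃₅+G₄₆, G₁₂−G₃₄+G₅₆, G₁₃+G₂₄+G₆₇, G₁₄−G₂₃−G₅₇}; moreover, the linear map A ↦ ρ₇(A)·s₅ restricted to m is injective with image exactly (ℝs₅)^⊥ = span{s₁, s₂, s₃, s₄, s₆, s₇, s₈}. -/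
/- STATEMENT 11: With respect to the Frobenius inner product on so(7), the
orthogonal complement of the 14-dimensional subalgebra
g₂ = {A ∈ so(7) : ρ₇(A)·s₅ = 0} is exactly the listed 7-dimensional m;
moreover A ↦ ρ₇(A)·s₅ restricted to m is injective with image exactly
(ℝs₅)^⊥ = span{s₁, s₂, s₃, s₄, s₆, s₇, s₈}.
(All indices 0-based: G a b = G_{a+1,b+1}, s 4 = s₅.) -/

open Matrix

namespace Stmt11

def E (i j : Fin 8) : Matrix (Fin 8) (Fin 8) ℝ :=
  Matrix.of fun k l => if k = i ∧ l = j then (-1 : ℝ) else if k = j ∧ l = i then 1 else 0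

def e : Fin 7 → Matrix (Fin 8) (Fin 8) ℝ :=
  ![E 0 7 + E 1 6 - E 2 5 - E 3 4,
    -E 0 6 + E 1 7 + E 2 4 - E 3 5,
    -E 0 5 + E 1 4 - E 2 7 + E 3 6,
    -E 0 4 - E 1 5 - E 2 6 - E 3 7,
    -E 0 2 - E 1 3 + E 4 6 + E 5 7,
    E 0 3 - E 1 2 - E 4 7 + E 5 6,
    E 0 1 - E 2 3 - E 4 5 + E 6 7]

def G (a b : Fin 7) : Matrix (Fin 7) (Fin 7) ℝ :=
  Matrix.of fun k l => if k = a ∧ l = b then (-1 : ℝ) else if k = b ∧ l = a then 1 else 0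

noncomputable def ρ₇ (A : Matrix (Fin 7) (Fin 7) ℝ) : Matrix (Fin 8) (Fin 8) ℝ :=
  (4⁻¹ : ℝ) • ∑ p, ∑ q, A q p • (e p * e q)

def s (i : Fin 8) : Fin 8 → ℝ := Pi.single i 1

/-- `m = g₂^⊥`, given by its seven spanning matrices. -/
def m : Submodule ℝ (Matrix (Fin 7) (Fin 7) ℝ) :=
  Submodule.span ℝ {G 0 5 - G 2 6 + G 1 4, G 0 4 - G 1 5 + G 3 6, G 0 6 + G 2 5 - G 3 4,
    G 1 6 + G 2 4 + G 3 5, G 0 1 - G 2 3 + G 4 5, G 0 2 + G 1 3 + G 5 6,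
    G 0 3 - G 1 2 - G 4 6}

/-- Integer version of `E`. -/
def EZ (i j : Fin 8) : Matrix (Fin 8) (Fin 8) ℤ :=
  Matrix.of fun k l => if k = i ∧ l = j then (-1 : ℤ) else if k = j ∧ l = i then 1 else 0

/-- Integer version of `e`. -/
def eZ : Fin 7 → Matrix (Fin 8) (Fin 8) ℤ :=
  ![EZ 0 7 + EZ 1 6 - EZ 2 5 - EZ 3 4,
    -EZ 0 6 + EZ 1 7 + EZ 2 4 - EZ 3 5,
    -EZ 0 5 + EZ 1 4 - EZ 2 7 + EZ 3 6,
    -EZ 0 4 - EZ 1 5 - EZ 2 6 - EZ 3 7,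
    -EZ 0 2 - EZ 1 3 + EZ 4 6 + EZ 5 7,
    EZ 0 3 - EZ 1 2 - EZ 4 7 + EZ 5 6,
    EZ 0 1 - EZ 2 3 - EZ 4 5 + EZ 6 7]

lemma E_apply (i j k l : Fin 8) : E i j k l = (EZ i j k l : ℝ) := by
  simp only [E, EZ, of_apply]
  split_ifs <;> simp

lemma e_apply (p : Fin 7) (k l : Fin 8) : e p k l = (eZ p k l : ℝ) := by
  fin_cases p <;> simp [e, eZ, E_apply]

/-- `T k p q` is the `k`-th coordinate of `e p * e q` applied to `s 4`. -/
def T : Fin 8 → Matrix (Fin 7) (Fin 7) ℤ :=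
  ![!![0, 0, 0, 0, 0, 1, 0; 0, 0, 0, 0, 1, 0, 0; 0, 0, 0, 0, 0, 0, -1; 0, 0, 0, 0, 0, 0, 0; 0, -1, 0, 0, 0, 0, 0; -1, 0, 0, 0, 0, 0, 0; 0, 0, 1, 0, 0, 0, 0],
    !![0, 0, 0, 0, -1, 0, 0; 0, 0, 0, 0, 0, 1, 0; 0, 0, 0, 0, 0, 0, 0; 0, 0, 0, 0, 0, 0, -1; 1, 0, 0, 0, 0, 0, 0; 0, -1, 0, 0, 0, 0, 0; 0, 0, 0, 1, 0, 0, 0],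
    !![0, 0, 0, 0, 0, 0, -1; 0, 0, 0, 0, 0, 0, 0; 0, 0, 0, 0, 0, -1, 0; 0, 0, 0, 0, 1, 0, 0; 0, 0, 0, -1, 0, 0, 0; 0, 0, 1, 0, 0, 0, 0; 1, 0, 0, 0, 0, 0, 0],
    !![0, 0, 0, 0, 0, 0, 0; 0, 0, 0, 0, 0, 0, -1; 0, 0, 0, 0, -1, 0, 0; 0, 0, 0, 0, 0, -1, 0; 0, 0, 1, 0, 0, 0, 0; 0, 0, 0, 1, 0, 0, 0; 0, 1, 0, 0, 0, 0, 0],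
    !![-1, 0, 0, 0, 0, 0, 0; 0, -1, 0, 0, 0, 0, 0; 0, 0, -1, 0, 0, 0, 0; 0, 0, 0, -1, 0, 0, 0; 0, 0, 0, 0, -1, 0, 0; 0, 0, 0, 0, 0, -1, 0; 0, 0, 0, 0, 0, 0, -1],
    !![0, 1, 0, 0, 0, 0, 0; -1, 0, 0, 0, 0, 0, 0; 0, 0, 0, -1, 0, 0, 0; 0, 0, 1, 0, 0, 0, 0; 0, 0, 0, 0, 0, 1, 0; 0, 0, 0, 0, -1, 0, 0; 0, 0, 0, 0, 0, 0, 0],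
    !![0, 0, -1, 0, 0, 0, 0; 0, 0, 0, -1, 0, 0, 0; 1, 0, 0, 0, 0, 0, 0; 0, 1, 0, 0, 0, 0, 0; 0, 0, 0, 0, 0, 0, 0; 0, 0, 0, 0, 0, 0, -1; 0, 0, 0, 0, 0, 1, 0],
    !![0, 0, 0, 1, 0, 0, 0; 0, 0, -1, 0, 0, 0, 0; 0, 1, 0, 0, 0, 0, 0; -1, 0, 0, 0, 0, 0, 0; 0, 0, 0, 0, 0, 0, -1; 0, 0, 0, 0, 0, 0, 0; 0, 0, 0, 0, 1, 0, 0]]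

lemma eZ_mul : ∀ (k : Fin 8) (p q : Fin 7), ∑ j, eZ p k j * eZ q j 4 = T k p q := by
  intro k p q
  have : ∀ x : Fin 8 × Fin 7 × Fin 7,
      ∑ j, eZ x.2.1 x.1 j * eZ x.2.2 j 4 = T x.1 x.2.1 x.2.2 := by
    decide +kernel
  exact this (k, p, q)

lemma e_mul (k : Fin 8) (p q : Fin 7) : (e p * e q) k 4 = (T k p q : ℝ) := by
  rw [← eZ_mul, mul_apply]
  push_cast
  simp only [e_apply]

lemma rho_apply (A : Matrix (Fin 7) (Fin 7) ℝ) (k : Fin 8) :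
    (ρ₇ A).mulVec (s 4) k = 4⁻¹ * ∑ p, ∑ q, A q p * (T k p q : ℝ) := by
  simp [s, ρ₇, Matrix.sum_apply, e_mul]

/-- Coordinates of `ρ₇ A` applied to `s 4`, for skew `A`. -/
noncomputable def vec (A : Matrix (Fin 7) (Fin 7) ℝ) : Fin 8 → ℝ :=
  ![(A 5 0 + A 4 1 - A 6 2) / 2, (-A 4 0 + A 5 1 - A 6 3) / 2, (-A 6 0 - A 5 2 + A 4 3) / 2,
    (-A 6 1 - A 4 2 - A 5 3) / 2, 0, (A 1 0 - A 3 2 + A 5 4) / 2,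
    (-A 2 0 - A 3 1 - A 6 5) / 2, (A 3 0 - A 2 1 - A 6 4) / 2]

lemma skew_apply {A : Matrix (Fin 7) (Fin 7) ℝ} (hA : Aᵀ = -A) (a b : Fin 7) :
    A a b = -A b a := by
  have := congrFun (congrFun hA b) a
  simpa using this

lemma key (A : Matrix (Fin 7) (Fin 7) ℝ) (hA : Aᵀ = -A) : (ρ₇ A).mulVec (s 4) = vec A := by
  have h := skew_apply hA
  have hd : ∀ i, A i i = 0 := fun i => by linarith [h i i]
  ext k
  rw [rho_apply]
  fin_cases k <;> simp [T, vec, Fin.sum_univ_seven, hd] <;>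
    linarith [h 0 1, h 0 2, h 0 3, h 0 4, h 0 5, h 0 6, h 1 2, h 1 3, h 1 4, h 1 5, h 1 6,
      h 2 3, h 2 4, h 2 5, h 2 6, h 3 4, h 3 5, h 3 6, h 4 5, h 4 6, h 5 6]

lemma G_transpose (a b : Fin 7) (h : a ≠ b) : (G a b)ᵀ = -G a b := by
  ext k l
  simp only [G, transpose_apply, of_apply, Matrix.neg_apply]
  split_ifs <;> simp_all

lemma trace_G {A : Matrix (Fin 7) (Fin 7) ℝ} (hA : Aᵀ = -A) (a b : Fin 7) (h : a ≠ b) :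
    (Aᵀ * G a b).trace = 2 * A b a := by
  have hG : G a b = Matrix.single b a 1 - Matrix.single a b 1 := by
    ext k l
    simp only [G, of_apply, Matrix.sub_apply, Matrix.single_apply]
    grind
  rw [hG, mul_sub, trace_sub, Matrix.trace_mul_single, Matrix.trace_mul_single]
  have := skew_apply hA a b
  simp
  linarith

lemma test_sub {A : Matrix (Fin 7) (Fin 7) ℝ} (hs : Aᵀ = -A)
    (hA : ∀ B : Matrix (Fin 7) (Fin 7) ℝ, Bᵀ = -B → (ρ₇ B).mulVec (s 4) = 0 →
      (Aᵀ * B).trace = 0) {a b c d : Fin 7} (hab : a ≠ b) (hcd : c ≠ d)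
    (hv : vec (G a b - G c d) = 0) : A b a - A d c = 0 := by
  have hsk : (G a b - G c d)ᵀ = -(G a b - G c d) := by
    rw [transpose_sub, G_transpose a b hab, G_transpose c d hcd]
    abel
  have := hA _ hsk (by rw [key _ hsk, hv])
  rw [mul_sub, trace_sub, trace_G hs _ _ hab, trace_G hs _ _ hcd] at this
  linarith

lemma test_add {A : Matrix (Fin 7) (Fin 7) ℝ} (hs : Aᵀ = -A)
    (hA : ∀ B : Matrix (Fin 7) (Fin 7) ℝ, Bᵀ = -B → (ρ₇ B).mulVec (s 4) = 0 →
      (Aᵀ * B).trace = 0) {a b c d : Fin 7} (hab : a ≠ b) (hcd : c ≠ d)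
    (hv : vec (G a b + G c d) = 0) : A b a + A d c = 0 := by
  have hsk : (G a b + G c d)ᵀ = -(G a b + G c d) := by
    rw [transpose_add, G_transpose a b hab, G_transpose c d hcd]
    abel
  have := hA _ hsk (by rw [key _ hsk, hv])
  rw [mul_add, trace_add, trace_G hs _ _ hab, trace_G hs _ _ hcd] at this
  linarith

/-- General element of `m`. -/
def comb (c : Fin 7 → ℝ) : Matrix (Fin 7) (Fin 7) ℝ :=
  c 0 • (G 0 5 - G 2 6 + G 1 4) +
    c 1 • (G 0 4 - G 1 5 + G 3 6) +
    c 2 • (G 0 6 + G 2 5 - G 3 4) +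
    c 3 • (G 1 6 + G 2 4 + G 3 5) +
    c 4 • (G 0 1 - G 2 3 + G 4 5) +
    c 5 • (G 0 2 + G 1 3 + G 5 6) +
    c 6 • (G 0 3 - G 1 2 - G 4 6)

lemma mem_m (A : Matrix (Fin 7) (Fin 7) ℝ) : A ∈ m ↔ ∃ c, A = comb c := by
  constructor
  · intro h
    simp only [m, Submodule.mem_span_insert, Submodule.mem_span_singleton] at h
    obtain ⟨c0, _, ⟨c1, _, ⟨c2, _, ⟨c3, _, ⟨c4, _, ⟨c5, _, ⟨c6, rfl⟩, rfl⟩, rfl⟩, rfl⟩, rfl⟩,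
      rfl⟩, rfl⟩ := h
    refine ⟨![c0, c1, c2, c3, c4, c5, c6], ?_⟩
    simp [comb, add_assoc]
  · rintro ⟨c, rfl⟩
    unfold comb m
    refine add_mem (add_mem (add_mem (add_mem (add_mem (add_mem ?_ ?_) ?_) ?_) ?_) ?_) ?_ <;>
      exact Submodule.smul_mem _ _ (Submodule.subset_span (by simp))

lemma comb_skew (c : Fin 7 → ℝ) : (comb c)ᵀ = -comb c := by
  simp +decide only [comb, transpose_add, transpose_sub, transpose_smul, G_transpose, ne_eq]
  module

lemma vec_comb (c : Fin 7 → ℝ) : vec (comb c) =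
    ![3 / 2 * c 0, -(3 / 2) * c 1, -(3 / 2) * c 2, -(3 / 2) * c 3, 0, 3 / 2 * c 4,
      -(3 / 2) * c 5, 3 / 2 * c 6] := by
  ext k
  fin_cases k <;> simp [vec, comb, G] <;> ring

lemma trace_comb (c : Fin 7 → ℝ) (B : Matrix (Fin 7) (Fin 7) ℝ) (hB : Bᵀ = -B)
    (h : vec B = 0) : ((comb c)ᵀ * B).trace = 0 := by
  rw [← trace_transpose, transpose_mul, transpose_transpose]
  have h0 := congrFun h 0
  have h1 := congrFun h 1
  have h2 := congrFun h 2
  have h3 := congrFun h 3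
  have h5 := congrFun h 5
  have h6 := congrFun h 6
  have h7 := congrFun h 7
  simp [vec] at h0 h1 h2 h3 h5 h6 h7
  simp +decide only [comb, mul_add, mul_sub, Matrix.mul_smul, trace_add, trace_sub, trace_smul,
    smul_eq_mul, trace_G hB, ne_eq]
  linear_combination 2 * c 0 * h0 - 2 * c 1 * h1 - 2 * c 2 * h2 - 2 * c 3 * h3 + 2 * c 4 * h5
    - 2 * c 5 * h6 + 2 * c 6 * h7

theorem g2_complement_acts_isomorphically :
    {A : Matrix (Fin 7) (Fin 7) ℝ | Aᵀ = -A ∧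
      ∀ B : Matrix (Fin 7) (Fin 7) ℝ, Bᵀ = -B → (ρ₇ B).mulVec (s 4) = 0 →
        (Aᵀ * B).trace = 0} = ↑m ∧
    (∀ A ∈ m, ∀ B ∈ m, (ρ₇ A).mulVec (s 4) = (ρ₇ B).mulVec (s 4) → A = B) ∧
    (fun A => (ρ₇ A).mulVec (s 4)) '' ↑m =
      ↑(Submodule.span ℝ {s 0, s 1, s 2, s 3, s 5, s 6, s 7}) := by
  refine ⟨?_, ?_, ?_⟩
  · ext A
    simp only [Set.mem_ofPred_eq, SetLike.mem_coe]
    constructor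
    · rintro ⟨hs, hA⟩
      rw [mem_m]
      have h0 : A 5 0 + A 6 2 = 0 := test_add hs hA (by decide) (by decide) (by simp [vec, G])
      have h1 : A 5 0 - A 4 1 = 0 := test_sub hs hA (by decide) (by decide) (by simp [vec, G])
      have h2 : A 4 0 + A 5 1 = 0 := test_add hs hA (by decide) (by decide) (by simp [vec, G])
      have h3 : A 4 0 - A 6 3 = 0 := test_sub hs hA (by decide) (by decide) (by simp [vec, G])
      have h4 : A 6 0 - A 5 2 = 0 := test_sub hs hA (by decide) (by decide) (by simp [vec, G])
      have h5 : A 6 0 + A 4 3 = 0 := test_add hs hA (by decide) (by decide) (by simp [vec, G])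
      have h6 : A 6 1 - A 4 2 = 0 := test_sub hs hA (by decide) (by decide) (by simp [vec, G])
      have h7 : A 6 1 - A 5 3 = 0 := test_sub hs hA (by decide) (by decide) (by simp [vec, G])
      have h8 : A 1 0 + A 3 2 = 0 := test_add hs hA (by decide) (by decide) (by simp [vec, G])
      have h9 : A 1 0 - A 5 4 = 0 := test_sub hs hA (by decide) (by decide) (by simp [vec, G])
      have h10 : A 2 0 - A 3 1 = 0 := test_sub hs hA (by decide) (by decide) (by simp [vec, G])
      have h11 : A 2 0 - A 6 5 = 0 := test_sub hs hA (by decide) (by decide) (by simp [vec, G])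
      have h12 : A 3 0 + A 2 1 = 0 := test_add hs hA (by decide) (by decide) (by simp [vec, G])
      have h13 : A 3 0 + A 6 4 = 0 := test_add hs hA (by decide) (by decide) (by simp [vec, G])
      refine ⟨![A 5 0, A 4 0, A 6 0, A 6 1, A 1 0, A 2 0, A 3 0], ?_⟩
      have h := skew_apply hs
      have hd : ∀ i, A i i = 0 := fun i => by linarith [h i i]
      have hlow : ∀ i j, j < i → A i j =
          comb ![A 5 0, A 4 0, A 6 0, A 6 1, A 1 0, A 2 0, A 3 0] i j := by
        intro i j hij
        fin_cases i <;> fin_cases j <;> first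
          | exact absurd hij (by decide)
          | (simp [comb, G] <;> linarith)
      have h' := skew_apply (comb_skew ![A 5 0, A 4 0, A 6 0, A 6 1, A 1 0, A 2 0, A 3 0])
      ext i j
      rcases lt_trichotomy i j with hij | rfl | hij
      · rw [h, h', hlow _ _ hij]
      · rw [hd]
        linarith [h' i i]
      · exact hlow _ _ hij
    · intro hA
      obtain ⟨c, rfl⟩ := (mem_m A).1 hA
      refine ⟨comb_skew c, fun B hB h => trace_comb c B hB ?_⟩
      rw [← key B hB, h]
  · intro A hA B hB h
    obtain ⟨c, rfl⟩ := (mem_m A).1 hA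
    obtain ⟨d, rfl⟩ := (mem_m B).1 hB
    rw [key _ (comb_skew c), key _ (comb_skew d), vec_comb, vec_comb] at h
    have : c = d := by
      ext i
      fin_cases i
      · simpa using congrFun h 0
      · simpa using congrFun h 1
      · simpa using congrFun h 2
      · simpa using congrFun h 3
      · simpa using congrFun h 5
      · simpa using congrFun h 6
      · simpa using congrFun h 7
    rw [this]
  · ext v
    simp only [Set.mem_image, SetLike.mem_coe, Submodule.mem_span_insert,
      Submodule.mem_span_singleton]
    constructor
    · rintro ⟨A, hA, rfl⟩
      obtain ⟨c, rfl⟩ := (mem_m A).1 hA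
      rw [key _ (comb_skew c), vec_comb]
      refine ⟨3 / 2 * c 0, _, ⟨-(3 / 2) * c 1, _, ⟨-(3 / 2) * c 2, _, ⟨-(3 / 2) * c 3, _,
        ⟨3 / 2 * c 4, _, ⟨-(3 / 2) * c 5, _, ⟨3 / 2 * c 6, rfl⟩, rfl⟩, rfl⟩, rfl⟩, rfl⟩, rfl⟩, ?_⟩
      ext k
      fin_cases k <;> simp [s]
    · rintro ⟨c0, _, ⟨c1, _, ⟨c2, _, ⟨c3, _, ⟨c4, _, ⟨c5, _, ⟨c6, rfl⟩, rfl⟩, rfl⟩, rfl⟩, rfl⟩,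
        rfl⟩, rfl⟩
      refine ⟨comb ![2 / 3 * c0, -(2 / 3) * c1, -(2 / 3) * c2, -(2 / 3) * c3, 2 / 3 * c4,
        -(2 / 3) * c5, 2 / 3 * c6], (mem_m _).2 ⟨_, rfl⟩, ?_⟩
      rw [key _ (comb_skew _), vec_comb]
      ext k
      fin_cases k <;> simp [s] <;> ring

end Stmt11
end

section
/- For every unit spinor φ ∈ ℝ⁸ there exists a unique linear map J_φ : ℝ⁶ → ℝ⁶ such that c(J_φ X)·φ = j·(c(X)·φ) for all X ∈ ℝ⁶; moreover J_φ² = −Id and J_φ is orthogonal (it preserves the Euclidean inner product on ℝ⁶), i.e. J_φ is an orthogonal almost complex structure on ℝ⁶ induced by the spinor φ. -/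
/- STATEMENT 13: For every unit spinor φ ∈ ℝ⁸ there exists a unique linear map
J_φ : ℝ⁶ → ℝ⁶ with c(J_φ X)·φ = j·(c(X)·φ) for all X; moreover J_φ² = −Id and
J_φ is orthogonal. -/

open Matrix
open scoped RealInnerProductSpace

noncomputable section

namespace Stmt13

def E (i j : Fin 8) : Matrix (Fin 8) (Fin 8) ℝ :=
  Matrix.of fun k l => if k = i ∧ l = j then (-1 : ℝ) else if k = j ∧ l = i then 1 else 0

def e : Fin 6 → Matrix (Fin 8) (Fin 8) ℝ :=
  ![E 0 7 + E 1 6 - E 2 5 - E 3 4,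
    -E 0 6 + E 1 7 + E 2 4 - E 3 5,
    -E 0 5 + E 1 4 - E 2 7 + E 3 6,
    -E 0 4 - E 1 5 - E 2 6 - E 3 7,
    -E 0 2 - E 1 3 + E 4 6 + E 5 7,
    E 0 3 - E 1 2 - E 4 7 + E 5 6]

def jmat : Matrix (Fin 8) (Fin 8) ℝ := e 0 * e 1 * e 2 * e 3 * e 4 * e 5

abbrev V8 := EuclideanSpace ℝ (Fin 8)
abbrev V6 := EuclideanSpace ℝ (Fin 6)

def c (X : V6) : Matrix (Fin 8) (Fin 8) ℝ := ∑ a, X a • e a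

def act (M : Matrix (Fin 8) (Fin 8) ℝ) (ψ : V8) : V8 :=
  (EuclideanSpace.equiv (Fin 8) ℝ).symm (M.mulVec (EuclideanSpace.equiv (Fin 8) ℝ ψ))

theorem act_mul (A B : Matrix (Fin 8) (Fin 8) ℝ) (ψ : V8) :
    act (A * B) ψ = act A (act B ψ) := by
  simp only [act, ← Matrix.mulVec_mulVec]
  rfl

/-- Coordinates of Clifford multiplication by a vector. -/
theorem act_c (X : V6) (p : V8) : act (c X) p = !₂[
    - X 0 * p 7 + X 1 * p 6 + X 2 * p 5 + X 3 * p 4 + X 4 * p 2 - X 5 * p 3,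
    - X 0 * p 6 - X 1 * p 7 - X 2 * p 4 + X 3 * p 5 + X 4 * p 3 + X 5 * p 2,
    X 0 * p 5 - X 1 * p 4 + X 2 * p 7 + X 3 * p 6 - X 4 * p 0 - X 5 * p 1,
    X 0 * p 4 + X 1 * p 5 - X 2 * p 6 + X 3 * p 7 - X 4 * p 1 + X 5 * p 0,
    - X 0 * p 3 + X 1 * p 2 + X 2 * p 1 - X 3 * p 0 - X 4 * p 6 + X 5 * p 7,
    - X 0 * p 2 - X 1 * p 3 - X 2 * p 0 - X 3 * p 1 - X 4 * p 7 - X 5 * p 6,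
    X 0 * p 1 - X 1 * p 0 + X 2 * p 3 - X 3 * p 2 + X 4 * p 4 + X 5 * p 5,
    X 0 * p 0 + X 1 * p 1 - X 2 * p 2 - X 3 * p 3 + X 4 * p 5 - X 5 * p 4] := by
  ext i
  fin_cases i <;>
    simp [act, c, e, E, Matrix.mulVec, dotProduct, Fin.sum_univ_eight, Fin.sum_univ_six,
      Matrix.of_apply] <;> ring

theorem e_eq_c (a : Fin 6) : e a = c (EuclideanSpace.single a 1) := by
  simp [c, ite_smul]

/-- Coordinates of the action of the volume element. -/
theorem act_j (p : V8) : act jmat p =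
    !₂[p 1, -p 0, -p 3, p 2, -p 5, p 4, p 7, -p 6] := by
  simp only [jmat, act_mul, e_eq_c, act_c]
  ext i
  fin_cases i <;> simp

theorem norm_sq_coords (φ : V8) (hφ : ‖φ‖ = 1) :
    φ 0 ^ 2 + φ 1 ^ 2 + φ 2 ^ 2 + φ 3 ^ 2 + φ 4 ^ 2 + φ 5 ^ 2 + φ 6 ^ 2 + φ 7 ^ 2 = 1 := by
  have h := EuclideanSpace.real_norm_sq_eq φ
  rw [hφ] at h
  simp only [Fin.sum_univ_eight] at h
  linarith

theorem inner_j (p q : V8) : ⟪act jmat p, act jmat q⟫ = ⟪p, q⟫ := by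
  rw [act_j, act_j]
  simp [PiLp.inner_apply, Fin.sum_univ_eight]
  ring

theorem j_j (p : V8) : act jmat (act jmat p) = -p := by
  rw [act_j, act_j]
  ext i
  fin_cases i <;> simp

theorem inner_c (φ : V8) (hφ : ‖φ‖ = 1) (X Y : V6) :
    ⟪act (c X) φ, act (c Y) φ⟫ = ⟪X, Y⟫ := by
  have h := norm_sq_coords φ hφ
  rw [act_c, act_c]
  simp [PiLp.inner_apply, Fin.sum_univ_eight, Fin.sum_univ_six]
  linear_combination (X 0 * Y 0 + X 1 * Y 1 + X 2 * Y 2 + X 3 * Y 3 + X 4 * Y 4 + X 5 * Y 5) * h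

theorem c_smul_act (r : ℝ) (X : V6) (φ : V8) : act (c (r • X)) φ = r • act (c X) φ := by
  rw [act_c, act_c]
  ext i
  fin_cases i <;> simp <;> ring

theorem c_add_act (X Y : V6) (φ : V8) : act (c (X + Y)) φ = act (c X) φ + act (c Y) φ := by
  rw [act_c, act_c, act_c]
  ext i
  fin_cases i <;> simp <;> ring

/-- Clifford multiplication on a fixed spinor, as a linear map. -/
def cl (φ : V8) : V6 →ₗ[ℝ] V8 where
  toFun X := act (c X) φ
  map_add' X Y := c_add_act X Y φ
  map_smul' r X := c_smul_act r X φ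

theorem cl_inj (φ : V8) (hφ : ‖φ‖ = 1) : Function.Injective (cl φ) := by
  rw [injective_iff_map_eq_zero]
  intro X hX
  have h := inner_c φ hφ X X
  change act (c X) φ = 0 at hX
  rw [hX, inner_zero_left] at h
  exact inner_self_eq_zero.mp h.symm

/-- The action of a matrix as a linear map. -/
def actL (M : Matrix (Fin 8) (Fin 8) ℝ) : V8 →ₗ[ℝ] V8 where
  toFun := act M
  map_add' X Y := by simp [act, Matrix.mulVec_add]
  map_smul' r X := by simp [act, Matrix.mulVec_smul]

/-- The induced structure: `X ↦ (⟪e a φ, j c(X) φ⟫)ₐ`. -/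
def Jmap (φ : V8) : V6 →ₗ[ℝ] V6 :=
  (LinearMap.adjoint (cl φ)) ∘ₗ actL jmat ∘ₗ cl φ

theorem Jmap_apply (φ : V8) (X : V6) (a : Fin 6) :
    Jmap φ X a = ⟪act (c (EuclideanSpace.single a 1)) φ, act jmat (act (c X) φ)⟫ := by
  have h : Jmap φ X a = ⟪(EuclideanSpace.single a (1 : ℝ) : V6), Jmap φ X⟫ := by
    simp [EuclideanSpace.inner_single_left]
  rw [h, Jmap, LinearMap.comp_apply, LinearMap.adjoint_inner_right]
  rfl

theorem Jmap_spec (φ : V8) (hφ : ‖φ‖ = 1) (X : V6) :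
    act (c (Jmap φ X)) φ = act jmat (act (c X) φ) := by
  have h := norm_sq_coords φ hφ
  have key : act (c (Jmap φ X)) φ =
      (φ 0 ^ 2 + φ 1 ^ 2 + φ 2 ^ 2 + φ 3 ^ 2 + φ 4 ^ 2 + φ 5 ^ 2 + φ 6 ^ 2 + φ 7 ^ 2) •
        act jmat (act (c X) φ) := by
    rw [act_c (Jmap φ X)]
    simp only [Jmap_apply]
    simp only [act_j, act_c]
    ext i
    fin_cases i <;> simp [PiLp.inner_apply, Fin.sum_univ_eight] <;> ring
  rw [key, h, one_smul]

theorem induced_almost_complex_structure (φ : V8) (hφ : ‖φ‖ = 1) :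
    (∃! J : V6 →ₗ[ℝ] V6, ∀ X : V6, act (c (J X)) φ = act jmat (act (c X) φ)) ∧
    (∀ J : V6 →ₗ[ℝ] V6, (∀ X : V6, act (c (J X)) φ = act jmat (act (c X) φ)) →
      (∀ X : V6, J (J X) = -X) ∧ (∀ X Y : V6, ⟪J X, J Y⟫ = ⟪X, Y⟫)) := by
  refine ⟨⟨Jmap φ, Jmap_spec φ hφ, ?_⟩, ?_⟩
  · intro J hJ
    ext1 X
    apply cl_inj φ hφ
    exact (hJ X).trans (Jmap_spec φ hφ X).symm
  · intro J hJ
    refine ⟨fun X => ?_, fun X Y => ?_⟩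
    · apply cl_inj φ hφ
      rw [map_neg]
      change act (c (J (J X))) φ = - act (c X) φ
      rw [hJ, hJ, j_j]
    · rw [← inner_c φ hφ, hJ, hJ, inner_j, inner_c φ hφ]

end Stmt13
end
end

section
/- For t > 0, define the seven matrices in so(7): Λ_t(X₁) = G₂₇ − (1−1/(4t))(G₃₅+G₄₆), Λ_t(X₂) = −G₁₇ − (1−1/(4t))(G₄₅−G₃₆), Λ_t(X₃) = (1/(4t))G₄₇ − (1/(4t))(G₂₆−G₁₅), Λ_t(X₄) = −(1/(4t))G₃₇ + (1/(4t))(G₁₆+G₂₅), Λ_t(X₅) = −(1/(4t))G₆₇ − (1/(4t))(G₁₃+G₂₄), Λ_t(X₆) = (1/(4t))G₅₇ − (1/(4t))(G₁₄−G₂₃), Λ_t(X₇) = G₁₂ + (1−1/(4t))(G₃₄−G₅₆). Then all seven matrices Λ_t(Xᵢ) lie in the subspace m = span{G₁₆−G₃₇+G₂₅, G₁₅−G₂₆+G₄₇, G₁₇+G₃₆−G₄₅, G₂₇+G₃₅+G₄₆, G₁₂−G₃₄+G₅₆, G₁₃+G₂₄+G₆₇, G₁₄−G₂₃−G₅₇}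 if and only if t = 1/8. (This is the condition under which the minimal G₂-connection of the homogeneous G₂-structure on the Aloff–Wallach space N(1,1) = SU(3)/S¹ is the canonical connection.) -/
/- STATEMENT 19: For t > 0, the seven matrices Λ_t(Xᵢ) ∈ so(7) representing the
Levi-Civita connection of the Aloff–Wallach space N(1,1) = SU(3)/S¹ all lie in
the subspace m = g₂^⊥ if and only if t = 1/8.
(All indices are 0-based: G a b = G_{a+1,b+1}.) -/

open Matrix

noncomputable section

namespace Stmt19

/-- The basis `G_{ab}` of `so(7)`. -/
def G (a b : Fin 7) : Matrix (Fin 7) (Fin 7) ℝ :=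
  Matrix.of fun k l => if k = a ∧ l = b then (-1 : ℝ) else if k = b ∧ l = a then 1 else 0

/-- `m = g₂^⊥`, given by its seven spanning matrices. -/
def m : Submodule ℝ (Matrix (Fin 7) (Fin 7) ℝ) :=
  Submodule.span ℝ {G 0 5 - G 2 6 + G 1 4, G 0 4 - G 1 5 + G 3 6, G 0 6 + G 2 5 - G 3 4,
    G 1 6 + G 2 4 + G 3 5, G 0 1 - G 2 3 + G 4 5, G 0 2 + G 1 3 + G 5 6,
    G 0 3 - G 1 2 - G 4 6}

/-- The Levi-Civita connection of the metric `g_t` on the Aloff–Wallach space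
`N(1,1) = SU(3)/S¹` in the orthonormal basis `X₁, …, X₇` (0-based). -/
def Λ (t : ℝ) : Fin 7 → Matrix (Fin 7) (Fin 7) ℝ :=
  ![G 1 6 - (1 - 1 / (4 * t)) • (G 2 4 + G 3 5),
    -G 0 6 - (1 - 1 / (4 * t)) • (G 3 4 - G 2 5),
    (1 / (4 * t)) • G 3 6 - (1 / (4 * t)) • (G 1 5 - G 0 4),
    -((1 / (4 * t)) • G 2 6) + (1 / (4 * t)) • (G 0 5 + G 1 4),
    -((1 / (4 * t)) • G 5 6) - (1 / (4 * t)) • (G 0 2 + G 1 3),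
    (1 / (4 * t)) • G 4 6 - (1 / (4 * t)) • (G 0 3 - G 1 2),
    G 0 1 + (1 - 1 / (4 * t)) • (G 2 3 - G 4 5)]

/-- A linear condition satisfied by every element of `m`. -/
lemma entry_eq_of_mem {X : Matrix (Fin 7) (Fin 7) ℝ} (hX : X ∈ m) : X 1 6 = X 2 4 := by
  unfold m at hX
  induction hX using Submodule.span_induction with
  | mem x hx =>
    simp only [Set.mem_insert_iff, Set.mem_singleton_iff] at hx
    rcases hx with rfl | rfl | rfl | rfl | rfl | rfl | rfl <;> simp [G]
  | zero => simp
  | add x y _ _ hx hy => simp [hx, hy]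
  | smul a x _ hx => simp [hx]

theorem AloffWallach_canonical_iff (t : ℝ) (ht : 0 < t) :
    (∀ i : Fin 7, Λ t i ∈ m) ↔ t = 1 / 8 := by
  constructor
  · intro h
    have h0 := entry_eq_of_mem (h 0)
    simp [Λ, G] at h0
    field_simp at h0
    linarith
  · rintro rfl i
    have key : ∀ (c : ℝ) (x y : Matrix (Fin 7) (Fin 7) ℝ), x ∈ m → y = c • x → y ∈ m := by
      rintro c x y hx rfl
      exact m.smul_mem c hx
    fin_cases i
    · refine key 1 (G 1 6 + G 2 4 + G 3 5) _ (Submodule.subset_span (by simp)) ?_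
      simp only [Λ]; norm_num; module
    · refine key (-1) (G 0 6 + G 2 5 - G 3 4) _ (Submodule.subset_span (by simp)) ?_
      simp only [Λ]; norm_num; module
    · refine key 2 (G 0 4 - G 1 5 + G 3 6) _ (Submodule.subset_span (by simp)) ?_
      simp only [Λ]; norm_num; module
    · refine key 2 (G 0 5 - G 2 6 + G 1 4) _ (Submodule.subset_span (by simp)) ?_
      simp only [Λ]; norm_num; module
    · refine key (-2) (G 0 2 + G 1 3 + G 5 6) _ (Submodule.subset_span (by simp)) ?_
      simp only [Λ]; norm_num; module
    · refine key (-2) (G 0 3 - G 1 2 - G 4 6) _ (Submodule.subset_span (by simp)) ?_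
      simp only [Λ]; norm_num; module
    · refine key 1 (G 0 1 - G 2 3 + G 4 5) _ (Submodule.subset_span (by simp)) ?_
      simp only [Λ]; norm_num; module

end Stmt19
end
end
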